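/- In the sequent calculus of binding logic over the language with a function symbol f of binding arity ⟨0⟩, a binder Λ of binding arity ⟨1⟩ and a predicate = of binding arity ⟨0,0⟩, the instance (∀x (f(x) = x)) ⇒ Λx f(x) = Λx x of the extensionality scheme is not derivable from the axioms of equality ∀x (x = x), ∀x∀y (x = y ⇒ y = x), ∀x∀y∀z (x = y ⇒ (y = z ⇒ x = z)), ∀x∀y (x = y ⇒ f(x) = f(y)) and ∀x∀y (x = y ⇒ Λz x = Λz y). In particular, there are instances of the extensionality scheme (∀x (t = u)) ⇒ Λx t = Λx u that are not consequences of the axioms of equality. -/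

import Mathlib

/- ## Binding logic: syntax and sequent calculus -/

/-- A binding-logic language: function and predicate symbols with binding arities. -/
structure BSig where
  Fn : Type
  Pr : Type
  /-- binding arity of a function symbol -/
  far : Fn → List ℕ
  /-- binding arity of a predicate symbol -/
  par : Pr → List ℕ

/-- Terms of binding logic (α-equivalence classes, in locally nameless / de Bruijn style):
`bvar i` is a variable bound by a binder of a function symbol or by a quantifier,
`fvar x` is a named free variable.  In `app f a`, the `i`-th argument `a i` is a term
in which `(S.far f).get i` additional variables (de Bruijn indices `0, …, kᵢ - 1`) are bound. -/
inductive Tm (S : BSig) : Type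
  | bvar : ℕ → Tm S
  | fvar : ℕ → Tm S
  | app : (f : S.Fn) → (Fin (S.far f).length → Tm S) → Tm S

variable {S : BSig}

/-- `Tm.WF p t`: all de Bruijn variables of `t` are bound among the `p` ambient binders;
a *term of the language* (over named free variables) at binder depth `p`. -/
def Tm.WF : ℕ → Tm S → Prop
  | p, .bvar i => i < p
  | _, .fvar _ => True
  | p, .app f a => ∀ i, Tm.WF (p + (S.far f).get i) (a i)

/-- Capture-avoiding substitution of the term `u` for the free variable `x`. -/
def Tm.subst (x : ℕ) (u : Tm S) : Tm S → Tm S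
  | .bvar i => .bvar i
  | .fvar y => if y = x then u else .fvar y
  | .app f a => .app f (fun i => Tm.subst x u (a i))

/-- Instantiation of the bound variable `k` by the (locally closed) term `u`. -/
def Tm.openT (u : Tm S) : ℕ → Tm S → Tm S
  | k, .bvar i => if i = k then u else .bvar i
  | _, .fvar y => .fvar y
  | k, .app f a => .app f (fun i => Tm.openT u (k + (S.far f).get i) (a i))

/-- Free (named) variables of a term. -/
def Tm.fv : Tm S → Set ℕ
  | .bvar _ => ∅
  | .fvar x => {x}
  | .app _ a => ⋃ i, (a i).fv

/-- Propositions of binding logic.  In `atom P a`, the `i`-th argument binds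
`(S.par P).get i` variables; quantifiers bind one de Bruijn variable. -/
inductive Fm (S : BSig) : Type
  | atom : (P : S.Pr) → (Fin (S.par P).length → Tm S) → Fm S
  | imp : Fm S → Fm S → Fm S
  | conj : Fm S → Fm S → Fm S
  | disj : Fm S → Fm S → Fm S
  | bot : Fm S
  | all : Fm S → Fm S
  | ex : Fm S → Fm S

/-- `Fm.WF q A`: well-formedness of `A` under `q` ambient quantifiers. -/
def Fm.WF : ℕ → Fm S → Prop
  | q, .atom P a => ∀ i, Tm.WF (q + (S.par P).get i) (a i)
  | q, .imp A B => Fm.WF q A ∧ Fm.WF q B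
  | q, .conj A B => Fm.WF q A ∧ Fm.WF q B
  | q, .disj A B => Fm.WF q A ∧ Fm.WF q B
  | _, .bot => True
  | q, .all A => Fm.WF (q + 1) A
  | q, .ex A => Fm.WF (q + 1) A

/-- Free (named) variables of a proposition. -/
def Fm.fv : Fm S → Set ℕ
  | .atom _ a => ⋃ i, (a i).fv
  | .imp A B => A.fv ∪ B.fv
  | .conj A B => A.fv ∪ B.fv
  | .disj A B => A.fv ∪ B.fv
  | .bot => ∅
  | .all A => A.fv
  | .ex A => A.fv

/-- Instantiation of the quantifier-bound variable `k` of a proposition by a term. -/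
def Fm.openF (u : Tm S) : ℕ → Fm S → Fm S
  | k, .atom P a => .atom P (fun i => Tm.openT u (k + (S.par P).get i) (a i))
  | k, .imp A B => .imp (Fm.openF u k A) (Fm.openF u k B)
  | k, .conj A B => .conj (Fm.openF u k A) (Fm.openF u k B)
  | k, .disj A B => .disj (Fm.openF u k A) (Fm.openF u k B)
  | _, .bot => .bot
  | k, .all A => .all (Fm.openF u (k + 1) A)
  | k, .ex A => .ex (Fm.openF u (k + 1) A)

/-- Capture-avoiding substitution of a term for a free variable in a proposition. -/
def Fm.subst (x : ℕ) (u : Tm S) : Fm S → Fm S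
  | .atom P a => .atom P (fun i => Tm.subst x u (a i))
  | .imp A B => .imp (Fm.subst x u A) (Fm.subst x u B)
  | .conj A B => .conj (Fm.subst x u A) (Fm.subst x u B)
  | .disj A B => .disj (Fm.subst x u A) (Fm.subst x u B)
  | .bot => .bot
  | .all A => .all (Fm.subst x u A)
  | .ex A => .ex (Fm.subst x u A)

/-- Free variables of a multiset of propositions. -/
def mFv (Γ : Multiset (Fm S)) : Set ℕ := {x | ∃ A ∈ Γ, x ∈ A.fv}

/-- The sequent calculus of binding logic: exactly the standard rules of classical
sequent calculus, with capture-avoiding substitution in the quantifier rules. -/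
inductive Deriv (S : BSig) : Multiset (Fm S) → Multiset (Fm S) → Prop
  | ax (A : Fm S) : Deriv S {A} {A}
  | cut {Γ Δ : Multiset (Fm S)} {A : Fm S} :
      Deriv S (A ::ₘ Γ) Δ → Deriv S Γ (A ::ₘ Δ) → Deriv S Γ Δ
  | contrL {Γ Δ} {A : Fm S} : Deriv S (A ::ₘ A ::ₘ Γ) Δ → Deriv S (A ::ₘ Γ) Δ
  | contrR {Γ Δ} {A : Fm S} : Deriv S Γ (A ::ₘ A ::ₘ Δ) → Deriv S Γ (A ::ₘ Δ)
  | weakL {Γ Δ} {A : Fm S} : Deriv S Γ Δ → Deriv S (A ::ₘ Γ) Δ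
  | weakR {Γ Δ} {A : Fm S} : Deriv S Γ Δ → Deriv S Γ (A ::ₘ Δ)
  | impL {Γ Δ} {A B : Fm S} :
      Deriv S Γ (A ::ₘ Δ) → Deriv S (B ::ₘ Γ) Δ → Deriv S ((Fm.imp A B) ::ₘ Γ) Δ
  | impR {Γ Δ} {A B : Fm S} :
      Deriv S (A ::ₘ Γ) (B ::ₘ Δ) → Deriv S Γ ((Fm.imp A B) ::ₘ Δ)
  | conjL {Γ Δ} {A B : Fm S} :
      Deriv S (A ::ₘ B ::ₘ Γ) Δ → Deriv S ((Fm.conj A B) ::ₘ Γ) Δ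
  | conjR {Γ Δ} {A B : Fm S} :
      Deriv S Γ (A ::ₘ Δ) → Deriv S Γ (B ::ₘ Δ) → Deriv S Γ ((Fm.conj A B) ::ₘ Δ)
  | disjL {Γ Δ} {A B : Fm S} :
      Deriv S (A ::ₘ Γ) Δ → Deriv S (B ::ₘ Γ) Δ → Deriv S ((Fm.disj A B) ::ₘ Γ) Δ
  | disjR {Γ Δ} {A B : Fm S} :
      Deriv S Γ (A ::ₘ B ::ₘ Δ) → Deriv S Γ ((Fm.disj A B) ::ₘ Δ)
  | botL {Γ Δ} : Deriv S ((Fm.bot) ::ₘ Γ) Δ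
  | allL {Γ Δ} {A : Fm S} {t : Tm S} : Tm.WF 0 t →
      Deriv S ((Fm.openF t 0 A) ::ₘ Γ) Δ → Deriv S ((Fm.all A) ::ₘ Γ) Δ
  | allR {Γ Δ} {A : Fm S} {x : ℕ} :
      x ∉ mFv Γ → x ∉ mFv Δ → x ∉ A.fv →
      Deriv S Γ ((Fm.openF (Tm.fvar x) 0 A) ::ₘ Δ) → Deriv S Γ ((Fm.all A) ::ₘ Δ)
  | exL {Γ Δ} {A : Fm S} {x : ℕ} :
      x ∉ mFv Γ → x ∉ mFv Δ → x ∉ A.fv →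
      Deriv S ((Fm.openF (Tm.fvar x) 0 A) ::ₘ Γ) Δ → Deriv S ((Fm.ex A) ::ₘ Γ) Δ
  | exR {Γ Δ} {A : Fm S} {t : Tm S} : Tm.WF 0 t →
      Deriv S Γ ((Fm.openF t 0 A) ::ₘ Δ) → Deriv S Γ ((Fm.ex A) ::ₘ Δ)
/- ## The language with f (binding arity ⟨0⟩), Λ (binding arity ⟨1⟩), = (binding arity ⟨0,0⟩) -/

inductive FLSym : Type
  | fsym : FLSym
  | lsym : FLSym

/-- The signature: a function symbol `f` of binding arity `⟨0⟩`, a binder `Λ` of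
binding arity `⟨1⟩`, and a predicate `=` of binding arity `⟨0,0⟩`. -/
def sigFL : BSig where
  Fn := FLSym
  Pr := Unit
  far := fun g => match g with | .fsym => [0] | .lsym => [1]
  par := fun _ => [0, 0]

/-- The atomic proposition `t = u`. -/
def eqF (t u : Tm sigFL) : Fm sigFL := .atom () ![t, u]

/-- `∀x (f(x) = x)`. -/
def extHyp : Fm sigFL := .all (eqF (.app .fsym ![.bvar 0]) (.bvar 0))

/-- `Λx f(x) = Λx x`. -/
def extConc : Fm sigFL :=
  eqF (.app .lsym ![.app .fsym ![.bvar 0]]) (.app .lsym ![.bvar 0])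

/-- `∀x (x = x)`. -/
def axEqRefl : Fm sigFL := .all (eqF (.bvar 0) (.bvar 0))

/-- `∀x ∀y (x = y ⇒ y = x)`. -/
def axEqSymm : Fm sigFL :=
  .all (.all (.imp (eqF (.bvar 1) (.bvar 0)) (eqF (.bvar 0) (.bvar 1))))

/-- `∀x ∀y ∀z (x = y ⇒ (y = z ⇒ x = z))`. -/
def axEqTrans : Fm sigFL :=
  .all (.all (.all (.imp (eqF (.bvar 2) (.bvar 1))
    (.imp (eqF (.bvar 1) (.bvar 0)) (eqF (.bvar 2) (.bvar 0))))))

/-- `∀x ∀y (x = y ⇒ f(x) = f(y))`. -/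
def axEqF : Fm sigFL :=
  .all (.all (.imp (eqF (.bvar 1) (.bvar 0))
    (eqF (.app .fsym ![.bvar 1]) (.app .fsym ![.bvar 0]))))

/-- `∀x ∀y (x = y ⇒ Λz x = Λz y)` (under the binder `Λ`, the quantified variables
are protected from capture, hence the indices are shifted by one). -/
def axEqLam : Fm sigFL :=
  .all (.all (.imp (eqF (.bvar 1) (.bvar 0))
    (eqF (.app .lsym ![.bvar 2]) (.app .lsym ![.bvar 1]))))

/-- The axioms of equality for this language. -/
def eqAxioms : Multiset (Fm sigFL) := {axEqRefl, axEqSymm, axEqTrans, axEqF, axEqLam}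

/-! ## A finite model -/

/-- Interpretation of the function symbols on pairs (level, value): the level counts the
ambient `Λ`-binders the element depends on. -/
def opM : (g : FLSym) → (Fin (sigFL.far g).length → ℕ × Bool) → ℕ × Bool
  | .fsym, v => ((v ⟨0, by decide⟩).1,
      if (v ⟨0, by decide⟩).1 = 0 then (v ⟨0, by decide⟩).2 else true)
  | .lsym, v => ((v ⟨0, by decide⟩).1 - 1, (v ⟨0, by decide⟩).2)

/-- Evaluation of a term below `d` binders `Λ` and quantifiers with values `L`. -/
def evM (σ : ℕ → Bool) (L : List Bool) : ℕ → Tm sigFL → ℕ × Bool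
  | d, .bvar i => if i < d then (i + 1, false) else (0, L.getD (i - d) false)
  | _, .fvar x => (0, σ x)
  | d, .app g a => opM g (fun i => evM σ L (d + (sigFL.far g).get i) (a i))

/-- Satisfaction. -/
def satM (σ : ℕ → Bool) : List Bool → Fm sigFL → Prop
  | L, .atom _ a => (evM σ L 0 (a (0 : Fin 2))).2 = (evM σ L 0 (a (1 : Fin 2))).2
  | L, .imp A B => satM σ L A → satM σ L B
  | L, .conj A B => satM σ L A ∧ satM σ L B
  | L, .disj A B => satM σ L A ∨ satM σ L B
  | _, .bot => False
  | L, .all A => ∀ b, satM σ (b :: L) A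
  | L, .ex A => ∃ b, satM σ (b :: L) A

theorem evM_wf (σ : ℕ → Bool) (L : List Bool) (t : Tm sigFL) : ∀ (p c : ℕ), Tm.WF p t →
    evM σ L (p + c) t = evM σ [] p t ∧ (evM σ [] p t).1 ≤ p := by
  induction t with
  | bvar i =>
    intro p c h
    have h : i < p := h
    have h2 : i < p + c := by omega
    simp [evM, h, h2]
  | fvar x => intro p c _; simp [evM]
  | app g a ih =>
    intro p c h
    have h : ∀ i, Tm.WF (p + (sigFL.far g).get i) (a i) := h
    have e : ∀ i, evM σ L (p + c + (sigFL.far g).get i) (a i)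
        = evM σ [] (p + (sigFL.far g).get i) (a i) := by
      intro i
      rw [add_right_comm]
      exact (ih i _ c (h i)).1
    refine ⟨?_, ?_⟩
    · simp only [evM, e]
    · cases g with
      | fsym => exact (ih ⟨0, by decide⟩ _ c (h ⟨0, by decide⟩)).2
      | lsym =>
        have := (ih ⟨0, by decide⟩ _ c (h ⟨0, by decide⟩)).2
        exact Nat.sub_le_of_le_add this

theorem evM_closed (σ : ℕ → Bool) (L : List Bool) (t : Tm sigFL) (d : ℕ) (h : Tm.WF 0 t) :
    evM σ L d t = (0, (evM σ [] 0 t).2) := by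
  have h1 := evM_wf σ L t 0 d h
  rw [zero_add] at h1
  rw [h1.1]
  exact Prod.ext (Nat.le_zero.mp h1.2) rfl

theorem evM_open (σ : ℕ → Bool) (u : Tm sigFL) (hu : Tm.WF 0 u) (L : List Bool)
    (t : Tm sigFL) : ∀ d, evM σ L d (Tm.openT u (L.length + d) t)
      = evM σ (L ++ [(evM σ [] 0 u).2]) d t := by
  induction t with
  | bvar i =>
    intro d
    simp only [Tm.openT]
    split_ifs with h
    · subst h
      rw [evM_closed σ L u d hu]
      simp [evM]
    · simp only [evM]
      split_ifs with h2
      · rfl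
      · congr 1
        rcases lt_or_ge (i - d) L.length with h3 | h3
        · simp [List.getD, List.getElem?_append_left h3]
        · have h4 : L.length < i - d := by omega
          rw [List.getD_eq_default _ _ h3, List.getD_eq_default]
          simp; omega
  | fvar x => intro d; rfl
  | app g a ih =>
    intro d
    simp only [Tm.openT, evM]
    congr 1
    funext i
    rw [add_assoc]
    exact ih i _

theorem satM_open (σ : ℕ → Bool) (u : Tm sigFL) (hu : Tm.WF 0 u) (A : Fm sigFL) :
    ∀ L : List Bool, satM σ L (Fm.openF u L.length A)
      ↔ satM σ (L ++ [(evM σ [] 0 u).2]) A := by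
  induction A with
  | atom P a =>
    intro L
    have h0 := evM_open σ u hu L (a (0 : Fin 2)) 0
    have h1 := evM_open σ u hu L (a (1 : Fin 2)) 0
    simp only [satM]
    rw [← h0, ← h1]
    exact Iff.rfl
  | imp A B iA iB => intro L; simp only [Fm.openF, satM, iA, iB]
  | conj A B iA iB => intro L; simp only [Fm.openF, satM, iA, iB]
  | disj A B iA iB => intro L; simp only [Fm.openF, satM, iA, iB]
  | bot => intro L; exact Iff.rfl
  | all A iA => intro L; exact forall_congr' fun b => iA (b :: L)
  | ex A iA => intro L; exact exists_congr fun b => iA (b :: L)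

theorem evM_congr (σ τ : ℕ → Bool) (L : List Bool) (t : Tm sigFL) :
    (∀ x ∈ t.fv, σ x = τ x) → ∀ d, evM σ L d t = evM τ L d t := by
  induction t with
  | bvar i => intro _ d; rfl
  | fvar x => intro h d; simp only [evM]; rw [h x rfl]
  | app g a ih =>
    intro h d
    simp only [evM]
    congr 1
    funext i
    exact ih i (fun x hx => h x (Set.mem_iUnion.mpr ⟨i, hx⟩)) _

theorem satM_congr (σ τ : ℕ → Bool) (A : Fm sigFL) :
    (∀ x ∈ A.fv, σ x = τ x) → ∀ L, satM σ L A ↔ satM τ L A := by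
  induction A with
  | atom P a =>
    intro h L
    simp only [satM]
    rw [evM_congr σ τ L (a (0 : Fin 2)) (fun x hx => h x (Set.mem_iUnion.mpr ⟨(0 : Fin 2), hx⟩)),
      evM_congr σ τ L (a (1 : Fin 2)) (fun x hx => h x (Set.mem_iUnion.mpr ⟨(1 : Fin 2), hx⟩))]
  | imp A B iA iB =>
    intro h L
    simp only [satM, iA (fun x hx => h x (Or.inl hx)), iB (fun x hx => h x (Or.inr hx))]
  | conj A B iA iB =>
    intro h L
    simp only [satM, iA (fun x hx => h x (Or.inl hx)), iB (fun x hx => h x (Or.inr hx))]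
  | disj A B iA iB =>
    intro h L
    simp only [satM, iA (fun x hx => h x (Or.inl hx)), iB (fun x hx => h x (Or.inr hx))]
  | bot => intro _ L; exact Iff.rfl
  | all A iA => intro h L; exact forall_congr' fun b => iA h (b :: L)
  | ex A iA => intro h L; exact exists_congr fun b => iA h (b :: L)

theorem satM_update (σ : ℕ → Bool) (x : ℕ) (b : Bool) (A : Fm sigFL) (h : x ∉ A.fv)
    (L : List Bool) : satM (Function.update σ x b) L A ↔ satM σ L A := by
  apply satM_congr
  intro y hy
  rw [Function.update_of_ne]
  rintro rfl
  exact h hy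

theorem satM_fresh (σ : ℕ → Bool) (x : ℕ) (b : Bool) (A : Fm sigFL) (h : x ∉ A.fv) :
    satM (Function.update σ x b) [] (Fm.openF (Tm.fvar x) 0 A) ↔ satM σ [b] A := by
  have := satM_open (Function.update σ x b) (Tm.fvar x) trivial A []
  simp only [List.length_nil, List.nil_append, evM, Function.update_self] at this
  rw [this, satM_update σ x b A h]

theorem satM_inst (σ : ℕ → Bool) (t : Tm sigFL) (ht : Tm.WF 0 t) (A : Fm sigFL) :
    satM σ [] (Fm.openF t 0 A) ↔ satM σ [(evM σ [] 0 t).2] A :=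
  satM_open σ t ht A []

theorem exists_mem_consM {p : Fm sigFL → Prop} {A : Fm sigFL} {Γ : Multiset (Fm sigFL)} :
    (∃ B ∈ A ::ₘ Γ, p B) ↔ p A ∨ ∃ B ∈ Γ, p B := by
  simp only [Multiset.mem_cons, or_and_right, exists_or, exists_eq_left]

theorem soundM {Γ Δ : Multiset (Fm sigFL)} (h : Deriv sigFL Γ Δ) :
    ∀ σ, (∀ A ∈ Γ, satM σ [] A) → ∃ B ∈ Δ, satM σ [] B := by
  induction h with
  | allL ht _ ih =>
    intro σ
    have := ih σ
    simp only [Multiset.forall_mem_cons, satM, satM_inst σ _ ht] at this ⊢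
    exact fun h => this ⟨h.1 _, h.2⟩
  | exR ht _ ih =>
    intro σ
    have := ih σ
    simp only [exists_mem_consM, satM, satM_inst σ _ ht] at this ⊢
    exact fun h => (this h).imp_left fun h => ⟨_, h⟩
  | @allR Γ Δ A x hΓ hΔ hA _ ih =>
    intro σ hs
    simp only [exists_mem_consM, satM] at ih ⊢
    by_contra! hc
    obtain ⟨⟨b, hb⟩, hc⟩ := hc
    rcases ih (Function.update σ x b) (fun B hB =>
      (satM_update σ x b B (fun h => hΓ ⟨B, hB, h⟩) []).2 (hs B hB)) with h | ⟨B, hB, h⟩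
    · exact hb ((satM_fresh σ x b A hA).1 h)
    · exact hc B hB ((satM_update σ x b B (fun h => hΔ ⟨B, hB, h⟩) []).1 h)
  | @exL Γ Δ A x hΓ hΔ hA _ ih =>
    intro σ hs
    simp only [Multiset.forall_mem_cons, satM] at ih hs
    obtain ⟨⟨b, hb⟩, hs⟩ := hs
    obtain ⟨B, hB, h⟩ := ih (Function.update σ x b) ⟨(satM_fresh σ x b A hA).2 hb,
      fun B hB => (satM_update σ x b B (fun h => hΓ ⟨B, hB, h⟩) []).2 (hs B hB)⟩
    exact ⟨B, hB, (satM_update σ x b B (fun h => hΔ ⟨B, hB, h⟩) []).1 h⟩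
  | ax A => intro σ; simp
  | botL => intro σ; simp [satM]
  | cut _ _ ih1 ih2 =>
    intro σ
    have h1 := ih1 σ
    have h2 := ih2 σ
    simp only [Multiset.forall_mem_cons, exists_mem_consM] at h1 h2 ⊢
    tauto
  | contrL _ ih | contrR _ ih | weakL _ ih | weakR _ ih | impR _ ih | conjL _ ih | disjR _ ih =>
    intro σ
    have h1 := ih σ
    simp only [Multiset.forall_mem_cons, exists_mem_consM, satM] at h1 ⊢
    tauto
  | impL _ _ ih1 ih2 | conjR _ _ ih1 ih2 | disjL _ _ ih1 ih2 =>
    intro σ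
    have h1 := ih1 σ
    have h2 := ih2 σ
    simp only [Multiset.forall_mem_cons, exists_mem_consM, satM] at h1 h2 ⊢
    tauto

theorem not_deriv_ext : ¬ Deriv sigFL eqAxioms {Fm.imp extHyp extConc} := by
  intro h
  obtain ⟨B, hB, hs⟩ := soundM h (fun _ => false) (by
    intro A hA
    simp only [eqAxioms, Multiset.insert_eq_cons, Multiset.mem_cons,
      Multiset.mem_singleton] at hA
    rcases hA with rfl | rfl | rfl | rfl | rfl
    · intro b; rfl
    · intro a b h; exact Eq.symm h
    · intro a b c h1 h2; exact Eq.trans h1 h2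
    · intro a b h; exact h
    · intro a b h; exact h)
  rw [Multiset.mem_singleton] at hB
  subst hB
  have h1 : satM (fun _ => false) [] extHyp := by intro b; rfl
  have h2 : true = false := hs h1
  exact Bool.noConfusion h2

/-- **Independence of the extensionality scheme.**  In the sequent calculus of binding
logic, the instance `(∀x (f(x) = x)) ⇒ Λx f(x) = Λx x` of the extensionality scheme is
not derivable from the axioms of equality; in particular there are instances
`(∀x (t = u)) ⇒ Λx t = Λx u` of the extensionality scheme that are not consequences of
the axioms of equality. -/
theorem extensionality_independent :
    (¬ Deriv sigFL eqAxioms {Fm.imp extHyp extConc}) ∧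
    (∃ t u : Tm sigFL, Tm.WF 1 t ∧ Tm.WF 1 u ∧
      ¬ Deriv sigFL eqAxioms
        {Fm.imp (.all (eqF t u)) (eqF (.app .lsym ![t]) (.app .lsym ![u]))}) := by
  refine ⟨not_deriv_ext, .app .fsym ![.bvar 0], .bvar 0, ?_, ?_, not_deriv_ext⟩
  · intro i
    match i with
    | ⟨0, _⟩ => exact Nat.zero_lt_one
  · exact Nat.zero_lt_one
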